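/- Consider N devices with local loss functions L_j : ℝ^d → ℝ (j = 1,…,N), each convex, ρ-Lipschitz, and β-smooth (i.e., its gradient is β-Lipschitz), nonnegative weights a_j summing to 1, global loss L(w) = Σ_j a_j L_j(w), and a global minimizer w* of L. Fix a step size η with 0 < η ≤ 1/β and an aggregation period τ ∈ ℕ, τ ≥ 1. Define federated iterates: all devices start from a common point w_j(0) = w₀; for each step t, if t+1 is not a multiple of τ then w_j(t+1) = w_j(t) − η∇L_j(w_j(t)), and if t+1 = kτ then every device's parameter is reset to the aggregate w(k) = Σ_l a_l (w_l(t) − η∇L_l(w_l(t))). Define auxiliary centralized iterates: for each k ≥ 1, v_k((k−1)τ) equals the common synchronized value w((k−1)) (with w(0) = w₀), and v_k(t+1) = v_k(t) − η∇L(v_k(t)) for (k−1)τ ≤ t < kτ. Let δ_j be constants with ‖∇L_j(w) − ∇L(w)‖ ≤ δ_j for all w, let δ = Σ_j a_j δ_j, let g_j(x) = (δ_j/β)((ηβ+1)^x − 1), and h(x) = (δ/β)((ηβ+1)^x − 1) − ηδx. Fix a device i, a time t ≥ 1, set K = ⌊t/τ⌋, ω = min_{1≤k≤K+1} ‖v_k((k−1)τ)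 − w*‖^{−2} (each v_k((k−1)τ) ≠ w*), and let ε₀ be the unique positive root of the quadratic t·ω·η·(1 − βη/2)·ε² − ε − ρ(K·h(τ) + g_i(t − Kτ)) = 0, namely ε₀ = 1/(tωη(2−βη)) + √( 1/(t²ω²η²(2−βη)²) + ρ(K·h(τ) + g_i(t−Kτ))/(tωη(1 − βη/2)) ). Assume that L(v_k(kτ)) − L(w*) ≥ ε₀ for every k = 1,…,K and that the sequence k ↦ L(v_k(kτ)) is non-increasing. Then the local loss of device i satisfies L(w_i(t)) − L(w*) ≤ ε₀ + ρ·g_i(t − Kτ). -/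

import Mathlib

section GradientDescent

variable {E : Type*} [NormedAddCommGroup E] [InnerProductSpace ℝ E] [CompleteSpace E]

lemma hasDerivAt_comp_add_smul {f : E → ℝ} (hf : Differentiable ℝ f) (x y : E)
    (s : ℝ) :
    HasDerivAt (fun s : ℝ => f (x + s • y)) (inner ℝ (gradient f (x + s • y)) y) s := by
  have h1 : HasDerivAt (fun s : ℝ => x + s • y) y s := by
    simpa using ((hasDerivAt_id s).smul_const y).const_add x
  have h2 := (hf (x + s • y)).hasFDerivAt.comp_hasDerivAt s h1
  rwa [inner_gradient_left]

/-- First-order characterization of convexity, one direction. -/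
lemma ConvexOn.add_inner_gradient_le {f : E → ℝ} (hc : ConvexOn ℝ Set.univ f)
    (hf : Differentiable ℝ f) (x y : E) :
    f x + inner ℝ (gradient f x) (y - x) ≤ f y := by
  have hφ : ConvexOn ℝ Set.univ (fun s : ℝ => f (x + s • (y - x))) := by
    refine ⟨convex_univ, fun p _ q _ a b ha hb hab => ?_⟩
    have h := hc.2 (Set.mem_univ (x + p • (y - x))) (Set.mem_univ (x + q • (y - x))) ha hb hab
    refine le_of_eq_of_le (congrArg f ?_) h
    obtain rfl : b = 1 - a := by linarith
    module
  have h := hφ.le_slope_of_hasDerivAt (Set.mem_univ 0) (Set.mem_univ 1) one_pos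
    (hasDerivAt_comp_add_smul hf x (y - x) 0)
  simp only [slope_def_field, zero_smul, one_smul, add_zero, add_sub_cancel, sub_zero, div_one] at h
  linarith

/-- Quadratic upper bound for functions with Lipschitz gradient (the descent lemma). -/
lemma le_add_inner_gradient_add_sq {f : E → ℝ} {β : ℝ} (hf : Differentiable ℝ f)
    (hs : ∀ x y, ‖gradient f x - gradient f y‖ ≤ β * ‖x - y‖) (x y : E) :
    f (x + y) ≤ f x + inner ℝ (gradient f x) y + β / 2 * ‖y‖ ^ 2 := by
  have hd : ∀ s : ℝ, HasDerivAt (fun s : ℝ => f (x + s • y) - s * inner ℝ (gradient f x) y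
      - β / 2 * ‖y‖ ^ 2 * s ^ 2)
      (inner ℝ (gradient f (x + s • y)) y - inner ℝ (gradient f x) y
        - β / 2 * ‖y‖ ^ 2 * (2 * s)) s := by
    intro s
    have h1 := hasDerivAt_comp_add_smul hf x y s
    have h2 := (hasDerivAt_id s).mul_const (inner ℝ (gradient f x) y)
    have h3 := ((hasDerivAt_id s).pow 2).const_mul (β / 2 * ‖y‖ ^ 2)
    exact ((h1.sub h2).sub h3).congr_deriv (by simp)
  have hanti : AntitoneOn (fun s : ℝ => f (x + s • y) - s * inner ℝ (gradient f x) y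
      - β / 2 * ‖y‖ ^ 2 * s ^ 2) (Set.Icc 0 1) := by
    refine antitoneOn_of_deriv_nonpos (convex_Icc 0 1)
      (fun s _ => (hd s).continuousAt.continuousWithinAt)
      (fun s _ => (hd s).differentiableAt.differentiableWithinAt) fun s hs' => ?_
    rw [interior_Icc] at hs'
    rw [(hd s).deriv, ← inner_sub_left]
    have h1 := real_inner_le_norm (gradient f (x + s • y) - gradient f x) y
    have h2 := hs (x + s • y) x
    rw [add_sub_cancel_left, norm_smul, Real.norm_of_nonneg hs'.1.le] at h2
    nlinarith [mul_le_mul_of_nonneg_right h2 (norm_nonneg y)]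
  have h := hanti (Set.left_mem_Icc.2 zero_le_one) (Set.right_mem_Icc.2 zero_le_one) zero_le_one
  simp only [one_smul, zero_smul, add_zero, one_mul, zero_mul, sub_zero, one_pow, mul_one,
    ne_eq, OfNat.ofNat_ne_zero, not_false_eq_true, zero_pow, mul_zero] at h
  linarith

lemma gradient_step_le {f : E → ℝ} {β : ℝ} (hf : Differentiable ℝ f)
    (hs : ∀ x y, ‖gradient f x - gradient f y‖ ≤ β * ‖x - y‖) (η : ℝ) (x : E) :
    f (x - η • gradient f x) ≤ f x - η * (1 - β * η / 2) * ‖gradient f x‖ ^ 2 := by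
  have h := le_add_inner_gradient_add_sq hf hs x (-(η • gradient f x))
  rw [← sub_eq_add_neg, inner_neg_right, real_inner_smul_right, real_inner_self_eq_norm_sq,
    norm_neg, norm_smul, mul_pow, Real.norm_eq_abs, sq_abs] at h
  linarith

lemma norm_gradient_step_sub_le {f : E → ℝ} {β : ℝ} (hc : ConvexOn ℝ Set.univ f)
    (hf : Differentiable ℝ f)
    (hs : ∀ x y, ‖gradient f x - gradient f y‖ ≤ β * ‖x - y‖) {z : E} (hz : ∀ x, f z ≤ f x)
    {η : ℝ} (hη : 0 ≤ η) (hβη : β * η ≤ 1) (x : E) :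
    ‖x - η • gradient f x - z‖ ≤ ‖x - z‖ := by
  have h1 := gradient_step_le hf hs η x
  have h2 := hz (x - η • gradient f x)
  have h3 := hc.add_inner_gradient_le hf x z
  have h4 : ‖x - η • gradient f x - z‖ ^ 2
      = ‖x - z‖ ^ 2 + 2 * η * inner ℝ (gradient f x) (z - x) + η ^ 2 * ‖gradient f x‖ ^ 2 := by
    have h5 : x - η • gradient f x - z = (x - z) - η • gradient f x := by abel
    have h6 : inner ℝ (gradient f x) (z - x) = - inner ℝ (x - z) (gradient f x) := by
      rw [real_inner_comm, ← inner_neg_left, neg_sub]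
    rw [h5, norm_sub_sq_real, h6, real_inner_smul_right, norm_smul, mul_pow, Real.norm_eq_abs,
      sq_abs]
    ring
  refine le_of_sq_le_sq ?_ (norm_nonneg _)
  rw [h4]
  have h7 : η * (1 / 2) * ‖gradient f x‖ ^ 2 ≤ η * (1 - β * η / 2) * ‖gradient f x‖ ^ 2 := by
    gcongr
    linarith
  nlinarith [mul_nonneg hη (show 0 ≤ - inner ℝ (gradient f x) (z - x)
    - η * (1 / 2) * ‖gradient f x‖ ^ 2 by linarith)]

/-- Reciprocal suboptimality gap of gradient descent grows at least linearly. -/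
lemma gradient_descent_inv_gap {f : E → ℝ} {β : ℝ} (hc : ConvexOn ℝ Set.univ f)
    (hf : Differentiable ℝ f)
    (hs : ∀ x y, ‖gradient f x - gradient f y‖ ≤ β * ‖x - y‖) {z : E} (hz : ∀ x, f z ≤ f x)
    {η : ℝ} (hη : 0 ≤ η) (hβη : β * η ≤ 1) (x : ℕ → E) {c : ℝ} (hc0 : 0 ≤ c)
    (hc1 : c * ‖x 0 - z‖ ^ 2 ≤ η * (1 - β * η / 2)) (n : ℕ)
    (hx : ∀ m < n, x (m + 1) = x m - η • gradient f (x m)) (hpos : 0 < f (x n) - f z) :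
    f (x n) ≤ f (x 0) ∧ 1 / (f (x 0) - f z) + n * c ≤ 1 / (f (x n) - f z) := by
  have hdist : ∀ m ≤ n, ‖x m - z‖ ≤ ‖x 0 - z‖ := by
    intro m
    induction m with
    | zero => simp
    | succ m ih =>
      intro hm
      rw [hx m hm]
      exact (norm_gradient_step_sub_le hc hf hs hz hη hβη _).trans (ih (by omega))
  have hα : 0 ≤ η * (1 - β * η / 2) := mul_nonneg hη (by linarith)
  induction n with
  | zero => simp
  | succ n ih =>
    have hstep := gradient_step_le hf hs η (x n)
    rw [← hx n n.lt_succ_self] at hstep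
    have hG := mul_nonneg hα (sq_nonneg ‖gradient f (x n)‖)
    have hposn : 0 < f (x n) - f z := by linarith
    obtain ⟨h1, h2⟩ := ih (fun m hm => hx m (by omega)) hposn (fun m hm => hdist m (by omega))
    refine ⟨by linarith, ?_⟩
    have h3 : f (x n) - f z ≤ ‖gradient f (x n)‖ * ‖x 0 - z‖ := by
      have h4 := hc.add_inner_gradient_le hf (x n) z
      have h5 := real_inner_le_norm (gradient f (x n)) (x n - z)
      have h6 : inner ℝ (gradient f (x n)) (z - x n) = - inner ℝ (gradient f (x n)) (x n - z) := by
        rw [← inner_neg_right, neg_sub]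
      have h7 := mul_le_mul_of_nonneg_left (hdist n (by omega)) (norm_nonneg (gradient f (x n)))
      linarith
    have h8 : c * (f (x n) - f z) ^ 2 ≤ η * (1 - β * η / 2) * ‖gradient f (x n)‖ ^ 2 := by
      calc c * (f (x n) - f z) ^ 2 ≤ c * (‖gradient f (x n)‖ * ‖x 0 - z‖) ^ 2 := by gcongr
        _ = c * ‖x 0 - z‖ ^ 2 * ‖gradient f (x n)‖ ^ 2 := by ring
        _ ≤ _ := by gcongr
    have h9 : 1 / (f (x n) - f z) + c ≤ 1 / (f (x (n + 1)) - f z) := by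
      rw [div_add' _ _ _ hposn.ne', div_le_div_iff₀ hposn hpos]
      have h10 : c * (f (x n) - f z) * (f (x (n + 1)) - f z) ≤ c * (f (x n) - f z) ^ 2 := by
        rw [sq, ← mul_assoc]
        gcongr
        linarith
      nlinarith
    push_cast
    linarith

end GradientDescent

section Deviation

variable {E : Type*} [NormedAddCommGroup E] [NormedSpace ℝ E]

lemma norm_perturbed_iterates_sub_le {F G : E → E} {β δ η : ℝ} (hβ : 0 < β) (hη : 0 ≤ η)
    (hF : ∀ x y, ‖F x - F y‖ ≤ β * ‖x - y‖) (hFG : ∀ x, ‖F x - G x‖ ≤ δ)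
    (x y : ℕ → E) (h0 : x 0 = y 0) (n : ℕ)
    (hx : ∀ m < n, x (m + 1) = x m - η • F (x m))
    (hy : ∀ m < n, y (m + 1) = y m - η • G (y m)) :
    ‖x n - y n‖ ≤ δ / β * ((η * β + 1) ^ n - 1) := by
  induction n with
  | zero => simp [h0]
  | succ n ih =>
    have ih := ih (fun m hm => hx m (by omega)) (fun m hm => hy m (by omega))
    rw [hx n n.lt_succ_self, hy n n.lt_succ_self]
    have h1 : x n - η • F (x n) - (y n - η • G (y n))
        = (x n - y n) - η • ((F (x n) - F (y n)) + (F (y n) - G (y n))) := by module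
    rw [h1]
    calc ‖(x n - y n) - η • ((F (x n) - F (y n)) + (F (y n) - G (y n)))‖
        ≤ ‖x n - y n‖ + η * ‖(F (x n) - F (y n)) + (F (y n) - G (y n))‖ := by
          refine (norm_sub_le _ _).trans_eq ?_
          rw [norm_smul, Real.norm_of_nonneg hη]
      _ ≤ ‖x n - y n‖ + η * (β * ‖x n - y n‖ + δ) := by
          gcongr
          exact (norm_add_le _ _).trans (add_le_add (hF _ _) (hFG _))
      _ = (η * β + 1) * ‖x n - y n‖ + η * δ := by ring
      _ ≤ (η * β + 1) * (δ / β * ((η * β + 1) ^ n - 1)) + η * δ := by gcongr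
      _ = δ / β * ((η * β + 1) ^ (n + 1) - 1) := by field_simp; ring

lemma norm_average_iterates_sub_le {ι : Type*} [Fintype ι] {a δ : ι → ℝ} (ha : ∀ j, 0 ≤ a j)
    (hasum : ∑ j, a j = 1) {F : ι → E → E} {G : E → E} {β η : ℝ} (hβ : 0 < β) (hη : 0 ≤ η)
    (hF : ∀ j x y, ‖F j x - F j y‖ ≤ β * ‖x - y‖) (hG : ∀ x, G x = ∑ j, a j • F j x)
    (x : ι → ℕ → E) (y : ℕ → E) (h0 : ∀ j, x j 0 = y 0) (n : ℕ)
    (hx : ∀ m < n, ∑ j, a j • x j (m + 1) = ∑ j, a j • (x j m - η • F j (x j m)))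
    (hy : ∀ m < n, y (m + 1) = y m - η • G (y m))
    (hdev : ∀ m < n, ∀ j, ‖x j m - y m‖ ≤ δ j / β * ((η * β + 1) ^ m - 1)) :
    ‖∑ j, a j • x j n - y n‖
      ≤ (∑ j, a j * δ j) / β * ((η * β + 1) ^ n - 1) - η * (∑ j, a j * δ j) * n := by
  induction n with
  | zero => simp [h0, ← Finset.sum_smul, hasum]
  | succ n ih =>
    have ih := ih (fun m hm => hx m (by omega)) (fun m hm => hy m (by omega))
      (fun m hm => hdev m (by omega))
    rw [hx n n.lt_succ_self, hy n n.lt_succ_self, hG]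
    have h1 : ∑ j, a j • (x j n - η • F j (x j n)) - (y n - η • ∑ j, a j • F j (y n))
        = (∑ j, a j • x j n - y n) - η • ∑ j, a j • (F j (x j n) - F j (y n)) := by
      simp only [smul_sub, Finset.sum_sub_distrib, smul_comm _ η, ← Finset.smul_sum]
      abel
    have h2 : ‖∑ j, a j • (F j (x j n) - F j (y n))‖
        ≤ (∑ j, a j * δ j) * ((η * β + 1) ^ n - 1) := by
      rw [Finset.sum_mul]
      refine norm_sum_le_of_le _ fun j _ => ?_
      rw [norm_smul, Real.norm_of_nonneg (ha j), mul_assoc]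
      refine mul_le_mul_of_nonneg_left ?_ (ha j)
      calc ‖F j (x j n) - F j (y n)‖ ≤ β * ‖x j n - y n‖ := hF _ _ _
        _ ≤ β * (δ j / β * ((η * β + 1) ^ n - 1)) := by
          gcongr
          exact hdev n n.lt_succ_self j
        _ = δ j * ((η * β + 1) ^ n - 1) := by field_simp
    rw [h1]
    calc _ ≤ ‖∑ j, a j • x j n - y n‖ + η * ‖∑ j, a j • (F j (x j n) - F j (y n))‖ := by
          refine (norm_sub_le _ _).trans_eq ?_
          rw [norm_smul, Real.norm_of_nonneg hη]
      _ ≤ _ := add_le_add ih (mul_le_mul_of_nonneg_left h2 hη)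
      _ = _ := by
          push_cast
          field_simp
          ring

end Deviation

section WeightedSum

variable {ι : Type*} [Fintype ι] {a : ι → ℝ} {E : Type*} [NormedAddCommGroup E] {L : ι → E → ℝ}

lemma convexOn_weighted_sum [NormedSpace ℝ E] (ha : ∀ j, 0 ≤ a j) (hconv : ∀ j, ConvexOn ℝ Set.univ (L j)) :
    ConvexOn ℝ Set.univ (fun x => ∑ j, a j * L j x) := by
  refine ⟨convex_univ, fun x hx y hy p q hp hq hpq => ?_⟩
  simp only [smul_eq_mul, Finset.mul_sum, ← Finset.sum_add_distrib]
  refine Finset.sum_le_sum fun j _ => ?_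
  have h := mul_le_mul_of_nonneg_left ((hconv j).2 hx hy hp hq hpq) (ha j)
  simp only [smul_eq_mul] at h
  linarith

lemma abs_weighted_sum_sub_le (ha : ∀ j, 0 ≤ a j) (hasum : ∑ j, a j = 1) {ρ : ℝ}
    (hlip : ∀ j x y, |L j x - L j y| ≤ ρ * ‖x - y‖) (x y : E) :
    |∑ j, a j * L j x - ∑ j, a j * L j y| ≤ ρ * ‖x - y‖ := by
  rw [← Finset.sum_sub_distrib, ← one_mul (ρ * ‖x - y‖), ← hasum, Finset.sum_mul]
  refine (Finset.abs_sum_le_sum_abs _ _).trans (Finset.sum_le_sum fun j _ => ?_)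
  rw [← mul_sub, abs_mul, abs_of_nonneg (ha j)]
  exact mul_le_mul_of_nonneg_left (hlip j x y) (ha j)

variable [InnerProductSpace ℝ E] [CompleteSpace E]

lemma hasGradientAt_weighted_sum (hdiff : ∀ j, Differentiable ℝ (L j)) (x : E) :
    HasGradientAt (fun x => ∑ j, a j * L j x) (∑ j, a j • gradient (L j) x) x := by
  rw [hasGradientAt_iff_hasFDerivAt]
  have h : HasFDerivAt (fun x => ∑ j, a j * L j x) (∑ j, a j • fderiv ℝ (L j) x) x :=
    HasFDerivAt.fun_sum fun j _ => (hdiff j x).hasFDerivAt.const_mul (a j)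
  refine h.congr_fderiv ?_
  ext y
  simp

lemma norm_gradient_weighted_sum_sub_le (ha : ∀ j, 0 ≤ a j) (hasum : ∑ j, a j = 1) {β : ℝ}
    (hdiff : ∀ j, Differentiable ℝ (L j))
    (hsmooth : ∀ j x y, ‖gradient (L j) x - gradient (L j) y‖ ≤ β * ‖x - y‖) (x y : E) :
    ‖gradient (fun x => ∑ j, a j * L j x) x - gradient (fun x => ∑ j, a j * L j x) y‖
      ≤ β * ‖x - y‖ := by
  rw [(hasGradientAt_weighted_sum hdiff x).gradient, (hasGradientAt_weighted_sum hdiff y).gradient,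
    ← Finset.sum_sub_distrib, ← one_mul (β * ‖x - y‖), ← hasum, Finset.sum_mul]
  refine norm_sum_le_of_le _ fun j _ => ?_
  rw [← smul_sub, norm_smul, Real.norm_of_nonneg (ha j)]
  exact mul_le_mul_of_nonneg_left (hsmooth j x y) (ha j)

end WeightedSum

lemma one_div_sub_one_div_le {A B ε r : ℝ} (hε : 0 < ε) (hA : ε ≤ A) (hB : ε ≤ B) (hr : 0 ≤ r)
    (h : B - A ≤ r) : 1 / A - 1 / B ≤ r / ε ^ 2 := by
  have hA' := hε.trans_le hA
  have hB' := hε.trans_le hB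
  rw [div_sub_div _ _ hA'.ne' hB'.ne', div_le_div_iff₀ (by positivity) (by positivity)]
  have h1 : ε ^ 2 ≤ A * B := by rw [sq]; gcongr
  calc (1 * B - A * 1) * ε ^ 2 ≤ r * ε ^ 2 := by gcongr; linarith
    _ ≤ r * (A * B) := by gcongr

lemma quadratic_root_spec {p C ε : ℝ} (hp : 0 < p) (hC : 0 ≤ C)
    (hε : ε = 1 / (2 * p) + Real.sqrt (1 / (2 * p) ^ 2 + C / p)) :
    0 < ε ∧ p * ε ^ 2 - ε = C := by
  have h1 := Real.sq_sqrt (show 0 ≤ 1 / (2 * p) ^ 2 + C / p by positivity)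
  have h2 : Real.sqrt (1 / (2 * p) ^ 2 + C / p) = ε - 1 / (2 * p) := by linarith
  refine ⟨by rw [hε]; positivity, ?_⟩
  rw [h2] at h1
  field_simp at h1
  refine mul_left_cancel₀ hp.ne' ?_
  linarith

/-- **Upper bound on the local loss in federated learning (Theorem 1).**
With `N` devices running federated gradient descent (local steps with period-`τ`
weighted aggregation) on convex, `ρ`-Lipschitz, `β`-smooth local losses `L j`,
global loss `Lg = ∑ j, a j • L j` minimized at `w*`, step size `0 < η ≤ 1/β`,
auxiliary centralized iterates `v k` restarted from the synchronized value at
each aggregation, gradient divergences `δ j`, and `ε₀` the positive root of the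
stated quadratic, if `Lg (v k (kτ)) − Lg w* ≥ ε₀` for `k = 1,…,K` and
`k ↦ Lg (v k (kτ))` is non-increasing, then
`Lg (w i t) − Lg w* ≤ ε₀ + ρ g_i (t − Kτ)`. -/
theorem stmt_0 (d N : ℕ) (hN : 1 ≤ N)
    (L : Fin N → EuclideanSpace ℝ (Fin d) → ℝ)
    (a : Fin N → ℝ) (ha : ∀ j, 0 ≤ a j) (hasum : ∑ j, a j = 1)
    (ρ β : ℝ) (hρ : 0 ≤ ρ) (hβ : 0 < β)
    (hconv : ∀ j, ConvexOn ℝ Set.univ (L j))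
    (hlip : ∀ j x y, |L j x - L j y| ≤ ρ * ‖x - y‖)
    (hdiff : ∀ j, Differentiable ℝ (L j))
    (hsmooth : ∀ j x y, ‖gradient (L j) x - gradient (L j) y‖ ≤ β * ‖x - y‖)
    (Lg : EuclideanSpace ℝ (Fin d) → ℝ)
    (hLg : ∀ x, Lg x = ∑ j, a j * L j x)
    (wstar : EuclideanSpace ℝ (Fin d)) (hmin : ∀ x, Lg wstar ≤ Lg x)
    (η : ℝ) (hη : 0 < η) (hηβ : η ≤ 1 / β)
    (τ : ℕ) (hτ : 1 ≤ τ)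
    -- federated iterates
    (w₀ : EuclideanSpace ℝ (Fin d))
    (w : Fin N → ℕ → EuclideanSpace ℝ (Fin d))
    (hw0 : ∀ j, w j 0 = w₀)
    (hwlocal : ∀ j s, ¬ (τ ∣ (s + 1)) →
      w j (s + 1) = w j s - η • gradient (L j) (w j s))
    (hwagg : ∀ j s, τ ∣ (s + 1) →
      w j (s + 1) = ∑ l, a l • (w l s - η • gradient (L l) (w l s)))
    -- the fixed device and time
    (i : Fin N) (t : ℕ) (ht : 1 ≤ t)
    (K : ℕ) (hK : K = t / τ)
    -- auxiliary centralized iterates, restarted from the synchronized value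
    (v : ℕ → ℕ → EuclideanSpace ℝ (Fin d))
    (hvinit : ∀ k, 1 ≤ k → v k ((k - 1) * τ) = w i ((k - 1) * τ))
    (hvstep : ∀ k s, 1 ≤ k → (k - 1) * τ ≤ s → s < k * τ →
      v k (s + 1) = v k s - η • gradient Lg (v k s))
    (hvne : ∀ k, 1 ≤ k → k ≤ K + 1 → v k ((k - 1) * τ) ≠ wstar)
    -- gradient divergence constants and the functions g, h
    (δ : Fin N → ℝ) (hδ : ∀ j x, ‖gradient (L j) x - gradient Lg x‖ ≤ δ j)
    (δbar : ℝ) (hδbar : δbar = ∑ j, a j * δ j)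
    (g : Fin N → ℕ → ℝ)
    (hg : ∀ j x, g j x = (δ j / β) * ((η * β + 1) ^ x - 1))
    (h : ℕ → ℝ)
    (hh : ∀ x, h x = (δbar / β) * ((η * β + 1) ^ x - 1) - η * δbar * x)
    -- ω and ε₀
    (ω : ℝ)
    (hω : ω = (Finset.Icc 1 (K + 1)).inf'
        (Finset.nonempty_Icc.mpr (by omega))
        (fun k => (‖v k ((k - 1) * τ) - wstar‖ ^ 2)⁻¹))
    (ε₀ : ℝ)
    (hε₀ : ε₀ = 1 / ((t : ℝ) * ω * η * (2 - β * η))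
        + Real.sqrt (1 / ((t : ℝ) ^ 2 * ω ^ 2 * η ^ 2 * (2 - β * η) ^ 2)
            + ρ * ((K : ℝ) * h τ + g i (t - K * τ))
              / ((t : ℝ) * ω * η * (1 - β * η / 2))))
    -- the two assumptions on the centralized iterates
    (hgap : ∀ k, 1 ≤ k → k ≤ K → ε₀ ≤ Lg (v k (k * τ)) - Lg wstar)
    (hmono : ∀ k₁ k₂, 1 ≤ k₁ → k₁ ≤ k₂ →
      Lg (v k₂ (k₂ * τ)) ≤ Lg (v k₁ (k₁ * τ))) :
    Lg (w i t) - Lg wstar ≤ ε₀ + ρ * g i (t - K * τ) := by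
  obtain rfl : Lg = fun x => ∑ j, a j * L j x := funext hLg
  have hgrad : ∀ x, gradient (fun x => ∑ j, a j * L j x) x = ∑ j, a j • gradient (L j) x :=
    fun x => (hasGradientAt_weighted_sum hdiff x).gradient
  have hLgdiff : Differentiable ℝ (fun x => ∑ j, a j * L j x) :=
    fun x => (hasGradientAt_weighted_sum hdiff x).differentiableAt
  have hLgconv := convexOn_weighted_sum ha hconv
  have hLgsm := norm_gradient_weighted_sum_sub_le ha hasum hdiff hsmooth
  have hLglip := abs_weighted_sum_sub_le ha hasum hlip
  clear hLg
  set Lg : EuclideanSpace ℝ (Fin d) → ℝ := fun x => ∑ j, a j * L j x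
  have hβη : β * η ≤ 1 := by
    rw [le_div_iff₀ hβ] at hηβ
    linarith
  have hδ0 : ∀ j, 0 ≤ δ j := fun j => (norm_nonneg _).trans (hδ j 0)
  have hδbar0 : 0 ≤ δbar := hδbar ▸ Finset.sum_nonneg fun j _ => mul_nonneg (ha j) (hδ0 j)
  have hg0 : ∀ j x, 0 ≤ g j x := fun j x => by
    rw [hg]
    have := one_le_pow₀ (n := x) (show 1 ≤ η * β + 1 by nlinarith)
    exact mul_nonneg (div_nonneg (hδ0 j) hβ.le) (by linarith)
  have hh0 : ∀ x, 0 ≤ h x := fun x => by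
    have h1 := one_add_mul_le_pow (show -2 ≤ η * β by nlinarith) x
    have h2 : h x = δbar / β * ((η * β + 1) ^ x - 1 - x * (η * β)) := by
      rw [hh]
      field_simp
    rw [h2]
    refine mul_nonneg (div_nonneg hδbar0 hβ.le) ?_
    rw [add_comm 1 (η * β)] at h1
    linarith
  have hsync : ∀ k j, w j (k * τ) = w i (k * τ) := by
    intro k j
    rcases hs : k * τ with _ | s
    · rw [hw0, hw0]
    · have hd : τ ∣ s + 1 := hs ▸ Dvd.intro_left k rfl
      rw [hwagg j s hd, hwagg i s hd]
  have hvinit' : ∀ k j, w j (k * τ) = v (k + 1) (k * τ) := fun k j => by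
    rw [hsync]
    exact (hvinit (k + 1) (by omega)).symm
  have hvstep' : ∀ k, ∀ m < τ, v (k + 1) (k * τ + (m + 1))
      = v (k + 1) (k * τ + m) - η • gradient Lg (v (k + 1) (k * τ + m)) := by
    intro k m hm
    refine hvstep (k + 1) (k * τ + m) (by omega) (by simp) ?_
    rw [Nat.succ_mul]
    omega
  have hwstep' : ∀ k j m, m + 1 < τ → w j (k * τ + (m + 1))
      = w j (k * τ + m) - η • gradient (L j) (w j (k * τ + m)) := by
    intro k j m hm
    refine hwlocal j (k * τ + m) fun hd => ?_
    rw [add_assoc, Nat.dvd_add_right (Dvd.intro_left k rfl)] at hd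
    exact absurd (Nat.le_of_dvd (by omega) hd) (by omega)
  have hdev : ∀ k j, ∀ m < τ, ‖w j (k * τ + m) - v (k + 1) (k * τ + m)‖ ≤ g j m := by
    intro k j m hm
    rw [hg]
    exact norm_perturbed_iterates_sub_le hβ hη.le (hsmooth j) (hδ j)
      (fun m => w j (k * τ + m)) (fun m => v (k + 1) (k * τ + m)) (hvinit' k j) m
      (fun p hp => hwstep' k j p (by omega)) (fun p hp => hvstep' k p (by omega))
  have hagg : ∀ k, ‖w i ((k + 1) * τ) - v (k + 1) ((k + 1) * τ)‖ ≤ h τ := by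
    intro k
    have h1 : ∑ j, a j • w j (k * τ + τ) = w i ((k + 1) * τ) := by
      rw [← Nat.succ_mul]
      simp only [Nat.succ_eq_add_one, hsync (k + 1), ← Finset.sum_smul, hasum, one_smul]
    have h2 := norm_average_iterates_sub_le (δ := δ) ha hasum (F := fun j => gradient (L j))
      hβ hη.le hsmooth hgrad (fun j m => w j (k * τ + m)) (fun m => v (k + 1) (k * τ + m))
      (hvinit' k) τ ?_ (hvstep' k) (fun m hm j => hg j m ▸ hdev k j m hm)
    · rw [h1, ← hδbar, ← hh, ← Nat.succ_mul] at h2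
      exact h2
    · intro m hm
      by_cases hd : τ ∣ k * τ + m + 1
      · have h3 := fun j => hwagg j (k * τ + m) hd
        simp only [← add_assoc, h3, ← Finset.sum_smul, hasum, one_smul]
      · exact Finset.sum_congr rfl fun j _ => congrArg (a j • ·) (hwlocal j _ hd)
  have hω0 : 0 < ω := by
    rw [hω, Finset.lt_inf'_iff]
    intro k hk
    rw [Finset.mem_Icc] at hk
    have := norm_pos_iff.2 (sub_ne_zero.2 (hvne k hk.1 hk.2))
    positivity
  have hωle : ∀ k ≤ K, ω * ‖v (k + 1) (k * τ) - wstar‖ ^ 2 ≤ 1 := by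
    intro k hk
    have h1 : ω ≤ (‖v (k + 1) (k * τ) - wstar‖ ^ 2)⁻¹ := by
      rw [hω]
      exact Finset.inf'_le (fun k => (‖v k ((k - 1) * τ) - wstar‖ ^ 2)⁻¹)
        (Finset.mem_Icc.2 ⟨by omega, by omega⟩ : k + 1 ∈ Finset.Icc 1 (K + 1))
    have h2 := norm_pos_iff.2 (sub_ne_zero.2 (hvne (k + 1) (by omega) (by omega)))
    rw [Nat.add_sub_cancel] at h2
    calc _ ≤ (‖v (k + 1) (k * τ) - wstar‖ ^ 2)⁻¹ * ‖v (k + 1) (k * τ) - wstar‖ ^ 2 := by gcongr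
      _ = 1 := inv_mul_cancel₀ (by positivity)
  have hα : 0 < η * (1 - β * η / 2) := mul_pos hη (by linarith)
  have ht0 : (0 : ℝ) < t := by exact_mod_cast ht
  have hc : 0 < ω * (η * (1 - β * η / 2)) := mul_pos hω0 hα
  have hC : 0 ≤ ρ * ((K : ℝ) * h τ + g i (t - K * τ)) :=
    mul_nonneg hρ (add_nonneg (mul_nonneg K.cast_nonneg (hh0 τ)) (hg0 _ _))
  obtain ⟨hε0, hquad⟩ := quadratic_root_spec (ε := ε₀) (mul_pos ht0 hc) hC (by
    rw [hε₀]
    congr 2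
    · ring
    · congr 2
      · ring
      · ring)
  have hrem : t - K * τ < τ := by
    rw [hK, mul_comm, ← Nat.mod_eq_sub_mul_div]
    exact Nat.mod_lt _ hτ
  have hKt : K * τ + (t - K * τ) = t := by
    have := Nat.div_mul_le_self t τ
    rw [← hK] at this
    omega
  set r := t - K * τ
  by_contra! hcon
  have hlast : ε₀ < Lg (v (K + 1) t) - Lg wstar := by
    have h1 := (abs_le.1 (hLglip (w i t) (v (K + 1) t))).2
    have h2 := hdev K i r hrem
    rw [hKt] at h2
    have h3 := mul_le_mul_of_nonneg_left h2 hρ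
    change Lg (w i t) - Lg (v (K + 1) t) ≤ _ at h1
    linarith
  have hdesc : ∀ k ≤ K, ∀ n ≤ τ, 0 < Lg (v (k + 1) (k * τ + n)) - Lg wstar →
      Lg (v (k + 1) (k * τ + n)) ≤ Lg (v (k + 1) (k * τ)) ∧
      1 / (Lg (v (k + 1) (k * τ)) - Lg wstar) + n * (ω * (η * (1 - β * η / 2)))
        ≤ 1 / (Lg (v (k + 1) (k * τ + n)) - Lg wstar) := by
    intro k hk n hn hpos
    refine gradient_descent_inv_gap hLgconv hLgdiff hLgsm hmin hη.le hβη
      (fun m => v (k + 1) (k * τ + m)) hc.le ?_ n (fun m hm => hvstep' k m (by omega)) hpos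
    rw [mul_right_comm]
    exact mul_le_of_le_one_left hα.le (hωle k hk)
  have hend : ∀ k < K, ε₀ ≤ Lg (v (k + 1) (k * τ + τ)) - Lg wstar := fun k hk => by
    rw [← Nat.succ_mul]
    exact hgap (k + 1) (by omega) hk
  have hstart : ∀ k ≤ K, ε₀ ≤ Lg (v (k + 1) (k * τ)) - Lg wstar := by
    intro k hk
    obtain rfl | hk' := hk.eq_or_lt
    · have h1 := (hdesc k le_rfl r hrem.le (by rw [hKt]; linarith)).1
      rw [hKt] at h1
      linarith
    · have h1 := hend k hk'
      have h2 := (hdesc k hk τ le_rfl (by linarith)).1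
      linarith
  have hinv : ∀ k ≤ K, (k * τ : ℝ) * (ω * (η * (1 - β * η / 2))) - k * (ρ * h τ / ε₀ ^ 2)
      ≤ 1 / (Lg (v (k + 1) (k * τ)) - Lg wstar) := by
    intro k
    induction k with
    | zero =>
      intro hk
      have h1 := hε0.le.trans (hstart 0 hk)
      simpa only [Nat.cast_zero, zero_mul, sub_zero] using one_div_nonneg.2 h1
    | succ k ih =>
      intro hk
      have h1 := ih (by omega)
      have h2 := (hdesc k (by omega) τ le_rfl (by linarith [hend k hk])).2
      have h3 : Lg (v (k + 2) ((k + 1) * τ)) - Lg wstar - (Lg (v (k + 1) (k * τ + τ)) - Lg wstar)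
          ≤ ρ * h τ := by
        have h4 := (abs_le.1 (hLglip (w i ((k + 1) * τ)) (v (k + 1) ((k + 1) * τ)))).2
        have h5 := mul_le_mul_of_nonneg_left (hagg k) hρ
        rw [← Nat.succ_mul, Nat.succ_eq_add_one, ← hvinit' (k + 1) i]
        change Lg _ - Lg _ ≤ _ at h4
        linarith
      have h6 := one_div_sub_one_div_le hε0 (hend k hk) (hstart (k + 1) hk)
        (mul_nonneg hρ (hh0 τ)) h3
      push_cast
      linarith
  have hfin := (hdesc K le_rfl r hrem.le (by rw [hKt]; linarith)).2
  have hfin2 := hinv K le_rfl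
  have hKt' : (K * τ : ℝ) + r = t := by exact_mod_cast hKt
  rw [hKt] at hfin
  have h1 := one_div_lt_one_div_of_lt hε0 hlast
  have h2 : t * (ω * (η * (1 - β * η / 2))) - K * (ρ * h τ / ε₀ ^ 2) < 1 / ε₀ := by
    rw [← hKt']
    linarith
  have h3 := mul_lt_mul_of_pos_right h2 (pow_pos hε0 2)
  have h4 : (t * (ω * (η * (1 - β * η / 2))) - K * (ρ * h τ / ε₀ ^ 2)) * ε₀ ^ 2
      = t * (ω * (η * (1 - β * η / 2))) * ε₀ ^ 2 - K * (ρ * h τ) := by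
    field_simp
  have h5 : 1 / ε₀ * ε₀ ^ 2 = ε₀ := by field_simp
  rw [h4, h5] at h3
  linarith [mul_nonneg hρ (hg0 i r)]
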